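/- arXiv:1509.02019 — 2 statements merged into one kernel-verified Lean document; each statement's English description precedes it below -/
import Mathlib

section
/- Let 𝐅 = (F_1,…,F_d) be a d-tuple of continuous cdfs on ℝ with F_{i-1} ≥ F_i pointwise for all 2 ≤ i ≤ d. Then J(𝐅) = J(δ^𝐅), where δ^𝐅 = (F_i ∘ G^{-1}, 1 ≤ i ≤ d) and G = (1/d) Σ_{i=1}^d F_i. -/
/-!
The two functionals agree term by term. Write `G` for the average cdf and `δ_i` for the law of
`G(X_i)`, `X_i ∼ F_i`. The key point is that `δ_i(G(t)) = F_i(t)` for every `t`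
(`cdf1_mdiagF_Gbar`): the set `{s | G s ≤ G t}` is `(-∞, t]` together with the part to the right
of `t` on which `G` is flat. There every `F_i` is flat too, being nondecreasing with a flat sum, so
this part is `F_i`-null (`measure_flat_eq_zero`). The change of variables `u = G(t)` then turns
`∫ |log (δ_{i-1}(u) - δ_i(u))| dδ_i(u)` into `∫ |log (F_{i-1}(t) - F_i(t))| dF_i(t)`.
-/

/- Formalization framework for "Maximum entropy distribution of order statistics with given
marginals" (Butucea, Delmas, Dutfoy, Fischer).  One-dimensional cdfs are identified with
(probability) measures on `ℝ`, and cdfs on `ℝ^d` with measures on `Fin d → ℝ`. -/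

open MeasureTheory Set
open scoped ENNReal

noncomputable section

namespace MaxEntOS

variable {d : ℕ}

/-- The cumulative distribution function of a measure on `ℝ`. -/
def cdf1 (ν : Measure ℝ) (t : ℝ) : ℝ := (ν (Iic t)).toReal

/-- The cdf extended to `EReal` arguments (so that `cdfE ν ⊥ = 0` and `cdfE ν ⊤ = ν ℝ`). -/
def cdfE (ν : Measure ℝ) (x : EReal) : ℝ := (ν {s : ℝ | (s : EReal) ≤ x}).toReal

/-- The generalized inverse (quantile function) of the cdf of `ν`, real-valued. -/
def qReal (ν : Measure ℝ) (t : ℝ) : ℝ := sInf {s : ℝ | t ≤ cdf1 ν s}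

/-- The generalized inverse of a nondecreasing function `g : ℝ → ℝ`, `EReal`-valued, with the
conventions `inf ∅ = ⊤` and `inf ℝ = ⊥`. -/
def qInvE (g : ℝ → ℝ) (t : ℝ) : EReal := sInf ((fun s : ℝ => (s : EReal)) '' {s : ℝ | t ≤ g s})

open scoped Classical in
/-- The differential entropy (with respect to Lebesgue measure) of a measure, with values in
`EReal` : it equals `⊥` if the measure is not absolutely continuous, and otherwise it is
`−∫ f log f`, computed as the difference of the lower integrals of the negative and positive
parts of `f log f`, where `f` is the density. -/
def dEntropy {α : Type*} [MeasureSpace α] (μ : Measure α) : EReal :=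
  if μ ≪ (volume : Measure α) then
    ((∫⁻ x, ENNReal.ofReal
        (-((μ.rnDeriv volume x).toReal * Real.log ((μ.rnDeriv volume x).toReal))) : ℝ≥0∞) : EReal)
      - ((∫⁻ x, ENNReal.ofReal
        ((μ.rnDeriv volume x).toReal * Real.log ((μ.rnDeriv volume x).toReal)) : ℝ≥0∞) : EReal)
  else ⊥

/-- The nondecreasing rearrangement (order statistics) of a tuple. -/
def orderStat (x : Fin d → ℝ) : Fin d → ℝ := fun i => x (Tuple.sort x i)

/-- The `i`-th one-dimensional marginal of a measure on `ℝ^d`. -/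
def marg (μ : Measure (Fin d → ℝ)) (i : Fin d) : Measure ℝ := μ.map fun x => x i

/-- The multidiagonal of a measure on `ℝ^d` : the tuple of one-dimensional marginals of the
order statistics. -/
def multidiag (μ : Measure (Fin d → ℝ)) (i : Fin d) : Measure ℝ := μ.map fun x => orderStat x i

/-- The uniform distribution on `[0,1]`. -/
def uniform01 : Measure ℝ := (volume : Measure ℝ).restrict (Icc 0 1)

/-- A copula : a probability measure on `ℝ^d` whose one-dimensional marginals are all uniform
on `[0,1]`. -/
def IsCopula (μ : Measure (Fin d → ℝ)) : Prop :=
  IsProbabilityMeasure μ ∧ ∀ i, marg μ i = uniform01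

/-- A measure on `ℝ^d` is symmetric (exchangeable) if it is invariant under permutations of the
coordinates. -/
def IsSymmetric (μ : Measure (Fin d → ℝ)) : Prop :=
  ∀ π : Equiv.Perm (Fin d), μ.map (fun x => fun i => x (π i)) = μ

/-- `δ` belongs to `D` : it is the multidiagonal of some copula. -/
def IsMultidiag (δ : Fin d → Measure ℝ) : Prop :=
  ∃ μ : Measure (Fin d → ℝ), IsCopula μ ∧ multidiag μ = δ

/-- `δ` belongs to `D^0` : it is the multidiagonal of some absolutely continuous copula. -/
def IsMultidiag0 (δ : Fin d → Measure ℝ) : Prop :=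
  ∃ μ : Measure (Fin d → ℝ), IsCopula μ ∧ μ ≪ (volume : Measure (Fin d → ℝ)) ∧ multidiag μ = δ

/-- `F ∈ F_d` : `F` is a `d`-tuple of continuous one-dimensional cdfs (identified with atomless
probability measures on `ℝ`) which are stochastically ordered : `F (i-1) ≥ F i` pointwise. -/
structure IsMargOS [NeZero d] (F : Fin d → Measure ℝ) : Prop where
  prob : ∀ i, IsProbabilityMeasure (F i)
  cont : ∀ i, ∀ t : ℝ, F i {t} = 0
  ord : ∀ i : Fin d, i ≠ 0 → ∀ t : ℝ, cdf1 (F i) t ≤ cdf1 (F (i - 1)) t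

/-- `μ ∈ L^OS_d(F)` : `μ` is the distribution of a `d`-dimensional order statistic (an almost
surely nondecreasing random vector) with one-dimensional marginals `F`. -/
def IsCdfOS (F : Fin d → Measure ℝ) (μ : Measure (Fin d → ℝ)) : Prop :=
  IsProbabilityMeasure μ ∧ μ {x | Monotone x} = 1 ∧ ∀ i, marg μ i = F i

/-- `F ∈ F_d^0` : there exists an absolutely continuous distribution of order statistics with
one-dimensional marginals `F`. -/
def IsMargOS0 [NeZero d] (F : Fin d → Measure ℝ) : Prop :=
  IsMargOS F ∧ ∃ μ : Measure (Fin d → ℝ), IsCdfOS F μ ∧ μ ≪ (volume : Measure (Fin d → ℝ))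

/-- The functional `J(F) = ∑_{i=2}^d ∫ |log (F_{i-1}(t) − F_i(t))| dF_i(t) ∈ [0,∞]`. -/
def Jfun [NeZero d] (F : Fin d → Measure ℝ) : ℝ≥0∞ :=
  ∑ i : Fin d, if i = 0 then 0 else
    ∫⁻ t, ENNReal.ofReal |Real.log (cdf1 (F (i - 1)) t - cdf1 (F i) t)| ∂(F i)

/-- The copula of a measure on `ℝ^d` (for continuous marginals this is the unique copula
provided by Sklar's theorem) : the law of `(F_1(X_1), …, F_d(X_d))`. -/
def copulaOf (μ : Measure (Fin d → ℝ)) : Measure (Fin d → ℝ) :=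
  μ.map fun x => fun i => cdf1 (marg μ i) (x i)

/-- The set `C^{OS}(F)` of copulas of distributions of order statistics with marginal
cdfs `F`. -/
def copulaOS (F : Fin d → Measure ℝ) : Set (Measure (Fin d → ℝ)) :=
  {C | ∃ μ, IsCdfOS F μ ∧ copulaOf μ = C}

/-- The joint distribution with one-dimensional marginals `F` and copula `C` : the law of
`(F_1^{-1}(U_1), …, F_d^{-1}(U_d))` where `U ∼ C`. -/
def joinCopula (F : Fin d → Measure ℝ) (C : Measure (Fin d → ℝ)) : Measure (Fin d → ℝ) :=
  C.map fun u => fun i => qReal (F i) (u i)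

/-- The law of `X_Π`, where `X ∼ μ` and `Π` is an independent uniform random permutation of
`{1, …, d}`. -/
def symmetrize (μ : Measure (Fin d → ℝ)) : Measure (Fin d → ℝ) :=
  (d.factorial : ℝ≥0∞)⁻¹ • ∑ π : Equiv.Perm (Fin d), μ.map (fun x => fun i => x (π i))

/-- The symmetrizing operator `S_F` on copulas : `S_F(C)` is the copula of `X_Π` where `X` has
one-dimensional marginals `F` and copula `C`, and `Π` is an independent uniform random
permutation. -/
def SF (F : Fin d → Measure ℝ) (C : Measure (Fin d → ℝ)) : Measure (Fin d → ℝ) :=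
  copulaOf (symmetrize (joinCopula F C))

/-- The average cdf `G = (1/d) ∑_{i=1}^d F_i`. -/
def Gbar (F : Fin d → Measure ℝ) (t : ℝ) : ℝ := (∑ i, cdf1 (F i) t) / d

/-- `G` extended to `EReal` arguments (`GbarE F ⊥ = 0` and `GbarE F ⊤ = 1` for probability
measures). -/
def GbarE (F : Fin d → Measure ℝ) (x : EReal) : ℝ := (∑ i, cdfE (F i) x) / d

/-- The multidiagonal `δ^F` associated to the marginals `F`, as a tuple of measures : the law
of `G(X_i)` where `X_i ∼ F_i`, whose cdf is `F_i ∘ G^{-1}`. -/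
def mdiagF (F : Fin d → Measure ℝ) (i : Fin d) : Measure ℝ := (F i).map (Gbar F)

/-- `C` is a copula of the measure `ν` on `ℝ^d` : `C` is a copula and `ν` is the joint
distribution with the marginals of `ν` and copula `C`. -/
def IsCopulaOf (C ν : Measure (Fin d → ℝ)) : Prop :=
  IsCopula C ∧ ν = joinCopula (marg ν) C

/-- The extended tuple of multidiagonal cdfs, with the conventions `δ_(0) = 1` and
`δ_(d+1) = 0`; the natural index `i ∈ {1, …, d}` corresponds to `δ_(i)`. -/
def dcdf (δ : Fin d → Measure ℝ) (i : ℕ) (t : ℝ) : ℝ :=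
  if h0 : i = 0 then 1
  else if h : i ≤ d then cdf1 (δ ⟨i - 1, by omega⟩) t
  else 0

/-- The open set `Ψ^δ_i = {t ∈ (0,1) : δ_(i-1)(t) > δ_(i)(t)}`, for `1 ≤ i ≤ d+1`
(with the conventions `δ_(0) = 1` and `δ_(d+1) = 0`). -/
def Psi (δ : Fin d → Measure ℝ) (i : ℕ) : Set ℝ :=
  Ioo 0 1 ∩ {t | dcdf δ i t < dcdf δ (i - 1) t}

/-- Left endpoint of the connected component of `U` containing `t`. -/
def lend (U : Set ℝ) (t : ℝ) : ℝ := sSup {s | s ≤ t ∧ s ∉ U}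

/-- Right endpoint of the connected component of `U` containing `t`. -/
def rend (U : Set ℝ) (t : ℝ) : ℝ := sInf {s | t ≤ s ∧ s ∉ U}

/-- Midpoint `m_i^{(j)}` of the connected component of `U` containing `t`. -/
def midpt (U : Set ℝ) (t : ℝ) : ℝ := (lend U t + rend U t) / 2

/-- The integrand `δ'_(i)(s) / (δ_(i-1)(s) − δ_(i)(s))` (that is, `K'_i`). -/
def kInt (δ : Fin d → Measure ℝ) (i : ℕ) (s : ℝ) : ℝ :=
  deriv (dcdf δ i) s / (dcdf δ (i - 1) s - dcdf δ i s)

/-- `K_i(t)`, integrating `K'_i` from the midpoint of the connected component of `Ψ^δ_i`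
containing `t` (note `K_{d+1} = 0` holds automatically, `δ_(d+1)` being constant). -/
def Kfun (δ : Fin d → Measure ℝ) (i : ℕ) (t : ℝ) : ℝ :=
  ∫ s in (midpt (Psi δ i) t)..t, kInt δ i s

/-- The function `a_i(t) = K'_i(t) e^{K_{i+1}(t) − K_i(t)} 1_{Ψ^δ_i ∩ Ψ^δ_{i+1}}(t)`. -/
def aFun (δ : Fin d → Measure ℝ) (i : ℕ) : ℝ → ℝ :=
  (Psi δ i ∩ Psi δ (i + 1)).indicator fun t =>
    kInt δ i t * Real.exp (Kfun δ (i + 1) t - Kfun δ i t)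

/-- The set `L_δ` of `u ∈ [0,1]^d` such that `(u_(i-1), u_(i)) ⊆ Ψ^δ_i` for all `2 ≤ i ≤ d`. -/
def Lset [NeZero d] (δ : Fin d → Measure ℝ) : Set (Fin d → ℝ) :=
  {u | (∀ j, u j ∈ Icc (0 : ℝ) 1) ∧
    ∀ i : Fin d, i ≠ 0 → Ioo (orderStat u (i - 1)) (orderStat u i) ⊆ Psi δ (i.val + 1)}

/-- The density `c_δ(u) = (1/d!) 1_{L_δ}(u) ∏_{i=1}^d a_i(u_(i))` of the maximum entropy copula
with multidiagonal `δ`. -/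
def cDelta [NeZero d] (δ : Fin d → Measure ℝ) : (Fin d → ℝ) → ℝ :=
  (Lset δ).indicator fun u =>
    (d.factorial : ℝ)⁻¹ * ∏ i : Fin d, aFun δ (i.val + 1) (orderStat u i)

/-- The maximum entropy copula `C_δ` with multidiagonal `δ` : the measure with density `c_δ`. -/
def CDelta [NeZero d] (δ : Fin d → Measure ℝ) : Measure (Fin d → ℝ) :=
  (volume : Measure (Fin d → ℝ)).withDensity fun u => ENNReal.ofReal (cDelta δ u)

/-- The density of a one-dimensional measure `ν` with respect to Lebesgue measure. -/
def densOf (ν : Measure ℝ) (t : ℝ) : ℝ := (ν.rnDeriv volume t).toReal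

/-- The function `ℓ_i(t) = f_i(t) / (F_{i-1}(t) − F_i(t))`. -/
def ellF [NeZero d] (F : Fin d → Measure ℝ) (i : Fin d) (t : ℝ) : ℝ :=
  densOf (F i) t / (cdf1 (F (i - 1)) t - cdf1 (F i) t)

/-- The set `L^F` of ordered vectors `x ∈ ℝ^d` such that `F_{i-1}(t) > F_i(t)` for all
`t ∈ (x_{i-1}, x_i)` and all `2 ≤ i ≤ d`. -/
def LsetF [NeZero d] (F : Fin d → Measure ℝ) : Set (Fin d → ℝ) :=
  {x | Monotone x ∧ ∀ i : Fin d, i ≠ 0 →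
    ∀ t ∈ Ioo (x (i - 1)) (x i), cdf1 (F i) t < cdf1 (F (i - 1)) t}

/-- The density `f_F` of the maximum entropy distribution of order statistics with marginal
cdfs `F` :
`f_F(x) = f_1(x_1) ∏_{i=2}^d ℓ_i(x_i) exp(−∫_{x_{i-1}}^{x_i} ℓ_i(s) ds) 1_{L^F}(x)`. -/
def fF [NeZero d] (F : Fin d → Measure ℝ) : (Fin d → ℝ) → ℝ :=
  (LsetF F).indicator fun x =>
    densOf (F 0) (x 0) *
      ∏ i ∈ Finset.univ.erase (0 : Fin d),
        ellF F i (x i) * Real.exp (-∫ s in (x (i - 1))..(x i), ellF F i s)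


lemma cdf1_mono (ν : Measure ℝ) [IsFiniteMeasure ν] : Monotone (cdf1 ν) := fun _ _ h =>
  ENNReal.toReal_mono (measure_ne_top _ _) (measure_mono (Iic_subset_Iic.2 h))

lemma Gbar_mono (F : Fin d → Measure ℝ) [∀ i, IsFiniteMeasure (F i)] : Monotone (Gbar F) :=
  fun _ _ h => div_le_div_of_nonneg_right
    (Finset.sum_le_sum fun i _ => cdf1_mono (F i) h) (Nat.cast_nonneg d)

/-- Where the average cdf is flat, each of the averaged cdfs is flat. -/
lemma cdf1_eq_of_Gbar_eq [NeZero d] (F : Fin d → Measure ℝ) [∀ i, IsFiniteMeasure (F i)]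
    {t s : ℝ} (h : t ≤ s) (hG : Gbar F s = Gbar F t) (i : Fin d) :
    cdf1 (F i) s = cdf1 (F i) t := by
  have hd : (d : ℝ) ≠ 0 := Nat.cast_ne_zero.2 (NeZero.ne d)
  have hsum : ∑ i, cdf1 (F i) t = ∑ i, cdf1 (F i) s :=
    ((div_left_inj' hd).1 hG).symm
  exact ((Finset.sum_eq_sum_iff_of_le fun i _ => cdf1_mono (F i) h).1 hsum i
    (Finset.mem_univ i)).symm

lemma measure_Ioc_eq_zero (ν : Measure ℝ) [IsFiniteMeasure ν] {t s : ℝ} (h : t ≤ s)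
    (hts : cdf1 ν s = cdf1 ν t) : ν (Ioc t s) = 0 := by
  have heq : ν (Iic s) = ν (Iic t) :=
    (ENNReal.toReal_eq_toReal_iff' (measure_ne_top _ _) (measure_ne_top _ _)).1 hts
  have hdiff : Iic s \ Iic t = Ioc t s := by
    ext x; simp [and_comm]
  rw [← hdiff, measure_sdiff (Iic_subset_Iic.2 h) measurableSet_Iic.nullMeasurableSet
    (measure_ne_top _ _), heq, tsub_self]

lemma measure_flat_eq_zero [NeZero d] (F : Fin d → Measure ℝ) [∀ i, IsFiniteMeasure (F i)]
    (i : Fin d) (t : ℝ) : F i {s | t < s ∧ Gbar F s = Gbar F t} = 0 := by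
  have hIoc : ∀ y, t < y → Gbar F y = Gbar F t → F i (Ioc t y) = 0 := fun y hy hG =>
    measure_Ioc_eq_zero _ hy.le (cdf1_eq_of_Gbar_eq F hy.le hG i)
  -- By second countability, it suffices to cover a neighbourhood of each `x` in the flat part by
  -- some null `Ioc t y`; one takes `y > x` in the flat part, or `y = x` if `x` is its maximum.
  refine measure_null_of_locally_null _ fun x hx => ?_
  by_cases hmax : ∃ y, x < y ∧ Gbar F y = Gbar F t
  · obtain ⟨y, hxy, hy⟩ := hmax
    exact ⟨Ioc t y, mem_nhdsWithin_of_mem_nhds (Ioc_mem_nhds hx.1 hxy),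
      hIoc y (hx.1.trans hxy) hy⟩
  · push Not at hmax
    refine ⟨Ioc t x, Filter.mem_of_superset self_mem_nhdsWithin fun s hs => ⟨hs.1, ?_⟩,
      hIoc x hx.1 hx.2⟩
    by_contra hsx
    exact hmax s (not_le.1 hsx) hs.2

/-- The identity `δ_i ∘ G = F_i`. -/
lemma cdf1_mdiagF_Gbar [NeZero d] (F : Fin d → Measure ℝ) [∀ i, IsFiniteMeasure (F i)]
    (i : Fin d) (t : ℝ) : cdf1 (mdiagF F i) (Gbar F t) = cdf1 (F i) t := by
  have hset : Gbar F ⁻¹' Iic (Gbar F t) = Iic t ∪ {s | t < s ∧ Gbar F s = Gbar F t} := by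
    ext s
    simp only [mem_preimage, mem_Iic, mem_union, mem_ofPred_eq]
    refine ⟨fun hs => ?_, ?_⟩
    · rcases le_or_gt s t with h | h
      · exact Or.inl h
      · exact Or.inr ⟨h, le_antisymm hs (Gbar_mono F h.le)⟩
    · rintro (h | h)
      · exact Gbar_mono F h
      · exact h.2.le
  unfold cdf1 mdiagF
  rw [Measure.map_apply (Gbar_mono F).measurable measurableSet_Iic, hset,
    measure_congr (union_ae_eq_left_of_ae_eq_empty
      (ae_eq_empty.2 (measure_flat_eq_zero F i t)))]

/-- Lemma `lem:J(F)`.  Let `F = (F_1, …, F_d)` be a `d`-tuple of continuous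
cdfs on `ℝ` with `F_{i-1} ≥ F_i` pointwise.  Then `J(F) = J(δ^F)`, where
`δ^F = (F_i ∘ G^{-1}, 1 ≤ i ≤ d)` (the law of `G(X_i)` for `X_i ∼ F_i`) and
`G = (1/d) ∑_{i=1}^d F_i`. -/
theorem stmt_11 {d : ℕ} [NeZero d] (F : Fin d → Measure ℝ) (hF : IsMargOS F) :
    Jfun F = Jfun (mdiagF F) := by
  have := hF.prob
  have hfin : ∀ i, IsFiniteMeasure (mdiagF F i) := fun i => by
    unfold mdiagF; infer_instance
  unfold Jfun
  refine Finset.sum_congr rfl fun i _ => ?_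
  split_ifs
  · rfl
  have hmeas : Measurable fun u : ℝ => ENNReal.ofReal
      |Real.log (cdf1 (mdiagF F (i - 1)) u - cdf1 (mdiagF F i) u)| := by
    have h1 := (cdf1_mono (mdiagF F (i - 1))).measurable
    have h2 := (cdf1_mono (mdiagF F i)).measurable
    exact ((Real.measurable_log.comp (h1.sub h2)).abs).ennreal_ofReal
  have hmap := lintegral_map (μ := F i) hmeas (Gbar_mono F).measurable
  simp only [cdf1_mdiagF_Gbar] at hmap
  exact hmap.symm

end MaxEntOS
end
end

section
/- Let 𝐅 = (F_1,…,F_d) ∈ F_d^0. The symmetrizing operator S_𝐅 is a bijection from C^OS(𝐅) ∩ C^0 onto C^sym(𝐅) ∩ C^0; moreover, if C ∈ C^OS(𝐅) ∩ C^0 has density c, then the density of S_𝐅(C) is given, for almost every u ∈ [0,1]^d, by (1/d!) c(δ_(1)(u_(1)),…,δ_(d)(u_(d))) ∏_{i=1}^d δ'_{(i)}(u_{(i)}), where u_(1) ≤ ⋯ ≤ u_(d) is the ordered vector of u and δ^𝐅 = (δ_(1),…,δ_(d)) = (F_i ∘ G^{-1}, 1 ≤ i ≤ d) with G = (1/d)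 Σ_{i=1}^d F_i. -/
/-!
Let `X` be an order statistic with law `μ` and marginals `F`, and let `ν` be the law of
`(G(X_1), …, G(X_d))` (`pushG F μ`). The marginals of `ν` are the laws `δ_(i)`, which are absolutely
continuous because their average is the uniform law, and `ν` is supported by monotone vectors since
`G` is nondecreasing. As `F_i = δ_(i) ∘ G`, the copula `C` of `X` is the image of `ν` under the
coordinatewise map `T(u) = (δ_(1)(u_1), …, δ_(d)(u_d))` (`copulaOf_eq`). As every marginal of `X_Π`
has cdf `G`, `S_F(C)` is the symmetrization of `ν` (`SF_copulaOf`).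

A law supported by monotone vectors is determined by its symmetrization (`symmetrize_inj`), which
gives injectivity. Symmetrization clearly preserves and reflects absolute continuity.

It remains to compare `ν` with `C = T_* ν`. Let `λ` be the product of the laws `δ_(i)`: it has
Lebesgue density `∏ δ'_(i)(u_i)` (`pi_eq_withDensity`) and `T_* λ` is uniform on the unit cube. The
quantile functions provide an almost sure left inverse of `T`, so laws dominated by `λ`, or having
the `δ_(i)` as marginals, are determined by their image under `T`. Hence if `C` has density `c`, then
`ν = (c ∘ T) λ`, with density `c(T(u)) ∏ δ'_(i)(u_i)` (`eq_pi_withDensity`). Conversely, if `ν` is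
absolutely continuous then `ν ≪ λ`, as `ν` does not charge `{∏ δ'_(i)(u_i) = 0}`, and
`C = T_* ν ≪ T_* λ` is absolutely continuous (`map_cdfMap_ac`).

Finally, symmetrizing a density `g` that vanishes off the monotone vectors gives the density
`(d!)⁻¹ g(u_(1), …, u_(d))` (`rnDeriv_symmetrize`).
-/

/- Formalization framework for "Maximum entropy distribution of order statistics with given
marginals" (Butucea, Delmas, Dutfoy, Fischer).  One-dimensional cdfs are identified with
(probability) measures on `ℝ`, and cdfs on `ℝ^d` with measures on `Fin d → ℝ`. -/

open MeasureTheory Set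
open scoped ENNReal

noncomputable section

namespace MaxEntOS

variable {d : ℕ}

/-! ### Cdfs and quantile functions of atomless laws on `ℝ` -/

section OneDim

lemma cdf1_nonneg {m : Measure ℝ} (t : ℝ) : 0 ≤ cdf1 m t := ENNReal.toReal_nonneg

variable {m : Measure ℝ} [IsProbabilityMeasure m]

lemma cdf1_eq_cdf : cdf1 m = ProbabilityTheory.cdf m := by
  ext t
  rw [ProbabilityTheory.cdf_eq_real]; rfl

lemma cdf1_mono_s15 : Monotone (cdf1 m) := by
  rw [cdf1_eq_cdf]; exact ProbabilityTheory.monotone_cdf m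

lemma cdf1_le_one (t : ℝ) : cdf1 m t ≤ 1 := by
  rw [cdf1_eq_cdf]; exact ProbabilityTheory.cdf_le_one m t

lemma ofReal_cdf1 (t : ℝ) : ENNReal.ofReal (cdf1 m t) = m (Iic t) :=
  ENNReal.ofReal_toReal (measure_ne_top _ _)

lemma continuous_cdf1 (hm : ∀ t, m {t} = 0) : Continuous (cdf1 m) := by
  rw [continuous_iff_continuousAt]
  intro t
  rw [cdf1_mono_s15.continuousAt_iff_leftLim_eq_rightLim, cdf1_eq_cdf,
    (ProbabilityTheory.cdf m).rightLim_eq]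
  have h := (ProbabilityTheory.cdf m).measure_singleton t
  rw [ProbabilityTheory.measure_cdf, hm, eq_comm, ENNReal.ofReal_eq_zero] at h
  exact le_antisymm ((ProbabilityTheory.monotone_cdf m).leftLim_le le_rfl) (by linarith)

lemma exists_cdf1_eq (hm : ∀ t, m {t} = 0) {t : ℝ} (ht : t ∈ Ioo (0 : ℝ) 1) :
    ∃ s, cdf1 m s = t := by
  have hbot := ProbabilityTheory.tendsto_cdf_atBot m
  have htop := ProbabilityTheory.tendsto_cdf_atTop m
  rw [← cdf1_eq_cdf] at hbot htop
  obtain ⟨a, ha⟩ := (hbot.eventually (gt_mem_nhds ht.1)).exists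
  obtain ⟨b, hb⟩ := (htop.eventually (lt_mem_nhds ht.2)).exists
  exact mem_range_of_exists_le_of_exists_ge (continuous_cdf1 hm) ⟨a, ha.le⟩ ⟨b, hb.le⟩

instance : IsProbabilityMeasure uniform01 := ⟨by simp [uniform01]⟩

/-- Probability integral transform: an atomless law is mapped by its cdf to the uniform law. -/
lemma map_cdf1 (hm : ∀ t, m {t} = 0) : m.map (cdf1 m) = uniform01 := by
  have hmeas : Measurable (cdf1 m) := cdf1_mono_s15.measurable
  have : IsProbabilityMeasure (m.map (cdf1 m)) := Measure.isProbabilityMeasure_map hmeas.aemeasurable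
  refine Measure.ext_of_Iic _ _ fun t => ?_
  rw [Measure.map_apply hmeas measurableSet_Iic]
  have hupper : ∀ t' ∈ Ioo (0 : ℝ) 1, t < t' → m (cdf1 m ⁻¹' Iic t) ≤ ENNReal.ofReal t' := by
    intro t' ht' htt'
    obtain ⟨s, rfl⟩ := exists_cdf1_eq hm ht'
    rw [ofReal_cdf1]
    refine measure_mono fun x hx => ?_
    by_contra hxs
    exact absurd (cdf1_mono_s15 (m := m) (not_le.1 hxs).le) (not_le.2 (lt_of_le_of_lt hx htt'))
  rcases le_or_gt 1 t with h1 | h1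
  · have e1 : cdf1 m ⁻¹' Iic t = univ := eq_univ_of_forall fun x => (cdf1_le_one x).trans h1
    have e2 : Icc (0 : ℝ) 1 ⊆ Iic t := fun x hx => hx.2.trans h1
    rw [e1, measure_univ, uniform01, Measure.restrict_apply measurableSet_Iic,
      inter_eq_right.2 e2]
    simp
  have e : uniform01 (Iic t) = ENNReal.ofReal t := by
    have : Iic t ∩ Icc (0 : ℝ) 1 = Icc 0 t := by
      ext x; simp only [mem_inter_iff, mem_Iic, mem_Icc]
      constructor
      · rintro ⟨a, b, c⟩; exact ⟨b, a⟩
      · rintro ⟨a, b⟩; exact ⟨b, a, b.trans h1.le⟩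
    rw [uniform01, Measure.restrict_apply measurableSet_Iic, this, Real.volume_Icc, sub_zero]
  rw [e]
  apply le_antisymm
  · refine le_of_forall_gt_imp_ge_of_dense fun b hb => ?_
    rcases eq_or_ne b ⊤ with rfl | hbt
    · exact le_top
    have hb' : t < b.toReal := by
      rcases le_or_gt t 0 with h0 | h0
      · refine h0.trans_lt (ENNReal.toReal_pos (by rintro rfl; simp at hb) hbt)
      · exact (ENNReal.ofReal_lt_iff_lt_toReal h0.le hbt).1 hb
    have hb0 : 0 < b.toReal := ENNReal.toReal_pos (by rintro rfl; simp at hb) hbt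
    obtain ⟨t', h1', h2'⟩ := exists_between
      (show max 0 t < min 1 b.toReal by simp [hb', hb0, h1])
    have := hupper t' ⟨(le_max_left _ _).trans_lt h1', h2'.trans_le (min_le_left _ _)⟩
      ((le_max_right _ _).trans_lt h1')
    exact this.trans ((ENNReal.ofReal_le_iff_le_toReal hbt).2 (h2'.le.trans (min_le_right _ _)))
  · rcases le_or_gt t 0 with h0 | h0
    · rw [ENNReal.ofReal_of_nonpos h0]; exact zero_le
    · obtain ⟨s, rfl⟩ := exists_cdf1_eq hm ⟨h0, h1⟩
      rw [ofReal_cdf1]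
      exact measure_mono fun x hx => cdf1_mono_s15 hx

lemma cdf1_level_null (hm : ∀ t, m {t} = 0) (c : ℝ) : m {x | cdf1 m x = c} = 0 := by
  have h : (m.map (cdf1 m)) {c} = 0 := by
    rw [map_cdf1 hm, uniform01]
    exact measure_mono_null (le_refl _) (by simp)
  rwa [Measure.map_apply cdf1_mono_s15.measurable (measurableSet_singleton c)] at h

/-- The quantile function is almost surely a left inverse of the cdf: the points where this fails
lie in countably many level sets of the cdf, which are null. -/
lemma qReal_cdf1_ae (hm : ∀ t, m {t} = 0) : ∀ᵐ x ∂m, qReal m (cdf1 m x) = x := by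
  have h0 : ∀ᵐ x ∂m, cdf1 m x ≠ 0 := by
    simpa [ae_iff] using cdf1_level_null hm 0
  have h1 : ∀ᵐ x ∂m, ∀ r : ℚ, cdf1 m x ≠ cdf1 m r :=
    ae_all_iff.2 fun r => by simpa [ae_iff] using cdf1_level_null hm (cdf1 m r)
  filter_upwards [h0, h1] with x hx0 hx1
  have hpos : 0 < cdf1 m x := lt_of_le_of_ne (cdf1_nonneg x) (Ne.symm hx0)
  have hbot := ProbabilityTheory.tendsto_cdf_atBot m
  rw [← cdf1_eq_cdf] at hbot
  have hleast : IsLeast {s | cdf1 m x ≤ cdf1 m s} x := by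
    refine ⟨le_refl (cdf1 m x), fun s hs => ?_⟩
    by_contra hlt
    obtain ⟨r, hr1, hr2⟩ := exists_rat_btwn (not_le.1 hlt)
    exact hx1 r (le_antisymm (le_trans hs (cdf1_mono_s15 hr1.le)) (cdf1_mono_s15 hr2.le))
  exact hleast.csInf_eq

lemma measurable_qReal (hm : ∀ t, m {t} = 0) : Measurable (qReal m) := by
  have hbot := ProbabilityTheory.tendsto_cdf_atBot m
  rw [← cdf1_eq_cdf] at hbot
  refine measurable_of_restrict_of_restrict_compl (measurableSet_Ioo (a := (0 : ℝ)) (b := 1)) ?_ ?_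
  · refine Monotone.measurable ?_
    rintro ⟨a, ha⟩ ⟨b, hb⟩ hab
    obtain ⟨s, hs⟩ := exists_cdf1_eq hm hb
    obtain ⟨l, hl⟩ := (hbot.eventually (gt_mem_nhds ha.1)).exists
    refine csInf_le_csInf ⟨l, fun y hy => ?_⟩ ⟨s, hs.ge⟩ fun y hy =>
      le_trans (show a ≤ b from hab) hy
    by_contra hyl
    exact absurd (le_trans hy (cdf1_mono_s15 (not_le.1 hyl).le)) (not_le.2 hl)
  -- outside `(0,1)` the infimum is that of `∅` or `ℝ` (junk value `0`), except possibly at `1`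
  · have : (Ioo (0 : ℝ) 1)ᶜ.domRestrict (qReal m) =
        fun x : ↥(Ioo (0 : ℝ) 1)ᶜ => if (x : ℝ) ∈ ({1} : Set ℝ) then qReal m 1 else 0 := by
      ext ⟨x, hx⟩
      simp only [domRestrict_apply, mem_singleton_iff]
      split_ifs with h
      · rw [h]
      · rcases le_or_gt x 0 with h0 | h0
        · have : {s | x ≤ cdf1 m s} = univ :=
            eq_univ_of_forall fun s => h0.trans (cdf1_nonneg s)
          rw [qReal, this, Real.sInf_univ]
        · have h1 : 1 < x := lt_of_le_of_ne (not_lt.1 fun h' => hx ⟨h0, h'⟩) (Ne.symm h)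
          have : {s | x ≤ cdf1 m s} = ∅ :=
            eq_empty_of_forall_notMem fun s hs => absurd (le_trans hs (cdf1_le_one s)) (not_le.2 h1)
          rw [qReal, this, Real.sInf_empty]
    rw [this]
    exact Measurable.ite (measurable_subtype_coe (measurableSet_singleton 1)) measurable_const
      measurable_const

/-- The derivative of the cdf of an absolutely continuous law is its density. -/
lemma withDensity_deriv_cdf1 (hac : m ≪ volume) :
    volume.withDensity (fun t => ENNReal.ofReal (deriv (cdf1 m) t)) = m := by
  have h := (ProbabilityTheory.cdf m).ae_hasDerivAt
  rw [ProbabilityTheory.measure_cdf, ← cdf1_eq_cdf] at h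
  conv_rhs => rw [← Measure.withDensity_rnDeriv_eq _ _ hac]
  refine withDensity_congr_ae ?_
  filter_upwards [h, m.rnDeriv_lt_top volume] with t ht ht'
  rw [ht.deriv, ENNReal.ofReal_toReal ht'.ne]

lemma deriv_cdf1_nonneg (t : ℝ) : 0 ≤ deriv (cdf1 m) t := cdf1_mono_s15.deriv_nonneg

lemma integrable_deriv_cdf1 (hac : m ≪ volume) : Integrable (deriv (cdf1 m)) := by
  refine ⟨(measurable_deriv _).aestronglyMeasurable, ?_⟩
  rw [hasFiniteIntegral_iff_ofReal (Filter.Eventually.of_forall deriv_cdf1_nonneg)]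
  have := congrArg (fun ν : Measure ℝ => ν univ) (withDensity_deriv_cdf1 hac)
  simp only [withDensity_apply _ MeasurableSet.univ, Measure.restrict_univ, measure_univ] at this
  rw [this]; exact ENNReal.one_lt_top

end OneDim

/-! ### Product densities and permutations of coordinates -/

/-- A product of absolutely continuous laws has the product of the derivatives of the cdfs as
density. -/
lemma pi_eq_withDensity (δ : Fin d → Measure ℝ) [∀ i, IsProbabilityMeasure (δ i)]
    (hac : ∀ i, δ i ≪ volume) :
    Measure.pi δ = (volume : Measure (Fin d → ℝ)).withDensity
      (fun u => ENNReal.ofReal (∏ i, deriv (cdf1 (δ i)) (u i))) := by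
  refine Measure.pi_eq fun s hs => ?_
  rw [withDensity_apply _ (MeasurableSet.univ_pi hs)]
  have hint : ∀ i, Integrable ((s i).indicator (deriv (cdf1 (δ i)))) := fun i =>
    (integrable_deriv_cdf1 (hac i)).indicator (hs i)
  have hnn : ∀ i t, 0 ≤ (s i).indicator (deriv (cdf1 (δ i))) t := fun i t =>
    indicator_nonneg (fun t _ => deriv_cdf1_nonneg t) t
  have hprod : ∀ u : Fin d → ℝ, (univ.pi s).indicator
      (fun u => ENNReal.ofReal (∏ i, deriv (cdf1 (δ i)) (u i))) u =
      ENNReal.ofReal (∏ i, (s i).indicator (deriv (cdf1 (δ i))) (u i)) := by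
    intro u
    by_cases hu : u ∈ univ.pi s
    · rw [indicator_of_mem hu]
      congr 1
      exact Finset.prod_congr rfl fun i _ => (indicator_of_mem (hu i (mem_univ i)) _).symm
    · rw [indicator_of_notMem hu]
      simp only [Set.mem_pi, mem_univ, true_imp_iff, not_forall] at hu
      obtain ⟨i, hi⟩ := hu
      rw [Finset.prod_eq_zero (Finset.mem_univ i) (indicator_of_notMem hi _), ENNReal.ofReal_zero]
  rw [← lintegral_indicator (MeasurableSet.univ_pi hs)]
  simp_rw [hprod]
  rw [← ofReal_integral_eq_lintegral_ofReal (by rw [volume_pi]; exact Integrable.fintype_prod hint)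
    (Filter.Eventually.of_forall fun u => Finset.prod_nonneg fun i _ => hnn i _),
    volume_pi, integral_fintype_prod_eq_prod (fun i => (s i).indicator (deriv (cdf1 (δ i)))),
    ENNReal.ofReal_prod_of_nonneg fun i _ => integral_nonneg (hnn i)]
  refine Finset.prod_congr rfl fun i _ => ?_
  rw [integral_indicator (hs i), ofReal_integral_eq_lintegral_ofReal
    (integrable_deriv_cdf1 (hac i)).integrableOn (Filter.Eventually.of_forall deriv_cdf1_nonneg),
    ← withDensity_apply _ (hs i), withDensity_deriv_cdf1 (hac i)]

lemma map_withDensity_comp {α β : Type*} [MeasurableSpace α] [MeasurableSpace β] (μ : Measure α)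
    {f : α → β} (hf : Measurable f) {g : β → ℝ≥0∞} (hg : Measurable g) :
    (μ.withDensity (fun x => g (f x))).map f = (μ.map f).withDensity g := by
  ext s hs
  rw [Measure.map_apply hf hs, withDensity_apply _ (hf hs), withDensity_apply _ hs,
    setLIntegral_map hs hg hf]

lemma measurable_perm (π : Equiv.Perm (Fin d)) :
    Measurable (fun (x : Fin d → ℝ) i => x (π i)) := by fun_prop

lemma map_perm_volume (π : Equiv.Perm (Fin d)) :
    (volume : Measure (Fin d → ℝ)).map (fun x i => x (π i)) = volume := by
  rw [volume_pi]
  refine (Measure.pi_eq fun s hs => ?_).symm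
  have : (fun (x : Fin d → ℝ) i => x (π i)) ⁻¹' univ.pi s = univ.pi fun i => s (π.symm i) := by
    ext x
    simp only [mem_preimage, Set.mem_pi, mem_univ, true_imp_iff]
    exact ⟨fun h i => by simpa using h (π.symm i), fun h i => by simpa using h (π i)⟩
  rw [Measure.map_apply (measurable_perm π) (MeasurableSet.univ_pi hs), this, Measure.pi_pi]
  exact Equiv.prod_comp π.symm fun i => volume (s i)

lemma symmetrize_apply (μ : Measure (Fin d → ℝ)) {s : Set (Fin d → ℝ)} (hs : MeasurableSet s) :
    symmetrize μ s = (d.factorial : ℝ≥0∞)⁻¹ *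
      ∑ π : Equiv.Perm (Fin d), μ ((fun x i => x (π i)) ⁻¹' s) := by
  simp only [symmetrize, Measure.smul_apply, Measure.finsetSum_apply, smul_eq_mul]
  congr 1
  exact Finset.sum_congr rfl fun π _ => Measure.map_apply (measurable_perm π) hs

/-- Almost every vector has pairwise distinct entries. -/
lemma ae_injective : ∀ᵐ u ∂(volume : Measure (Fin d → ℝ)), Function.Injective u := by
  have h : ∀ i j : Fin d, ∀ᵐ u ∂(volume : Measure (Fin d → ℝ)), u i = u j → i = j := by
    intro i j
    by_cases hij : i = j
    · exact Filter.Eventually.of_forall fun _ _ => hij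
    have := Measure.addHaar_submodule (volume : Measure (Fin d → ℝ))
      (LinearMap.ker ((LinearMap.proj i : (Fin d → ℝ) →ₗ[ℝ] ℝ) - LinearMap.proj j)) (by
        intro htop
        have : (Pi.single i 1 : Fin d → ℝ) ∈ (⊤ : Submodule ℝ (Fin d → ℝ)) := trivial
        rw [← htop] at this
        simp [Ne.symm hij] at this)
    refine measure_mono_null (fun u hu => ?_) this
    have hu' : u i = u j := by
      by_contra hne
      exact hu fun h => absurd h hne
    simp [hu']
  filter_upwards [ae_all_iff.2 fun i => ae_all_iff.2 (h i)] with u hu i j using hu i j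

/-! ### Measures on `ℝ^d` and their images under the marginal cdfs -/

/-- Coordinatewise application of the cdfs of the laws `m i`. -/
def cdfMap (m : Fin d → Measure ℝ) (x : Fin d → ℝ) : Fin d → ℝ := fun i => cdf1 (m i) (x i)

/-- Coordinatewise application of the quantile functions of the laws `m i`. -/
def qMap (m : Fin d → Measure ℝ) (u : Fin d → ℝ) : Fin d → ℝ := fun i => qReal (m i) (u i)

section Core

variable {m : Fin d → Measure ℝ} [∀ i, IsProbabilityMeasure (m i)]

lemma measurable_cdfMap : Measurable (cdfMap m) :=
  measurable_pi_lambda _ fun i => (cdf1_mono_s15 (m := m i)).measurable.comp (measurable_pi_apply i)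

lemma measurable_qMap (hm : ∀ i t, m i {t} = 0) : Measurable (qMap m) :=
  measurable_pi_lambda _ fun i => (measurable_qReal (hm i)).comp (measurable_pi_apply i)

/-- A law whose marginals are dominated by atomless laws `m i` is recovered from its image under
the cdfs of the `m i`. -/
lemma map_qMap_map_cdfMap (hm : ∀ i t, m i {t} = 0) {ν : Measure (Fin d → ℝ)}
    (hν : ∀ i, marg ν i ≪ m i) : (ν.map (cdfMap m)).map (qMap m) = ν := by
  rw [Measure.map_map (measurable_qMap hm) measurable_cdfMap]
  have : qMap m ∘ cdfMap m =ᵐ[ν] id := by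
    have h : ∀ᵐ x ∂ν, ∀ i, qReal (m i) (cdf1 (m i) (x i)) = x i := ae_all_iff.2 fun i =>
      ae_of_ae_map (measurable_pi_apply i).aemeasurable ((hν i).ae_le (qReal_cdf1_ae (hm i)))
    filter_upwards [h] with x hx
    exact funext hx
  rw [Measure.map_congr this, Measure.map_id]

/-- The unit cube. -/
def cube (d : ℕ) : Set (Fin d → ℝ) := univ.pi fun _ => Icc 0 1

lemma measurableSet_cube : MeasurableSet (cube d) := MeasurableSet.univ_pi fun _ => measurableSet_Icc

lemma cdfMap_mem_cube (x : Fin d → ℝ) : cdfMap m x ∈ cube d :=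
  fun _ _ => ⟨cdf1_nonneg _, cdf1_le_one _⟩

lemma map_cdfMap_pi (hm : ∀ i t, m i {t} = 0) :
    (Measure.pi m).map (cdfMap m) = (volume : Measure (Fin d → ℝ)).restrict (cube d) := by
  have : ∀ i, IsProbabilityMeasure ((m i).map (cdf1 (m i))) := fun i =>
    Measure.isProbabilityMeasure_map cdf1_mono_s15.measurable.aemeasurable
  have h := Measure.pi_map_pi (μ := m) (f := fun i => cdf1 (m i))
    fun i => (cdf1_mono_s15 (m := m i)).measurable.aemeasurable
  rw [volume_pi, cube, Measure.restrict_pi_pi]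
  refine h.trans ?_
  congr 1
  funext i
  exact map_cdf1 (hm i)

/-- If the image of `ν` under the cdfs is absolutely continuous with density `c`, then `ν` has
density `c ∘ cdfMap` with respect to the product of the `m i`: both laws have the same image under
the cdfs, and this image determines them. -/
lemma eq_pi_withDensity (hm : ∀ i t, m i {t} = 0) {ν : Measure (Fin d → ℝ)}
    [IsFiniteMeasure ν] (hν : ∀ i, marg ν i = m i) (hac : ν.map (cdfMap m) ≪ volume) :
    ν = (Measure.pi m).withDensity
      (fun u => (ν.map (cdfMap m)).rnDeriv volume (cdfMap m u)) := by
  set C := ν.map (cdfMap m) with hC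
  set ν' := (Measure.pi m).withDensity (fun u => C.rnDeriv volume (cdfMap m u)) with hν'
  have hν'm : ∀ i, marg ν' i ≪ m i := by
    intro i
    have h := (withDensity_absolutelyContinuous (Measure.pi m)
      (fun u => C.rnDeriv volume (cdfMap m u))).map (measurable_pi_apply i)
    rwa [(measurePreserving_eval m i).map_eq] at h
  have hCC : ν'.map (cdfMap m) = C := by
    rw [hν', map_withDensity_comp _ measurable_cdfMap (Measure.measurable_rnDeriv _ _),
      map_cdfMap_pi hm, ← restrict_withDensity measurableSet_cube,
      Measure.withDensity_rnDeriv_eq _ _ hac, Measure.restrict_eq_self_of_ae_mem]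
    rw [hC]
    refine (ae_map_iff measurable_cdfMap.aemeasurable (measurableSet_cube (d := d))).2 ?_
    exact Filter.Eventually.of_forall fun x => cdfMap_mem_cube x
  rw [← map_qMap_map_cdfMap hm hν'm, hCC, hC,
    map_qMap_map_cdfMap hm fun i => (hν i).absolutelyContinuous]

/-- Conversely, if `ν` is absolutely continuous, so is its image under the cdfs: `ν` does not charge
the zeros of `∏ i, deriv (cdf1 (m i)) (u i)`, so it is dominated by the product of the `m i`, whose
image is the uniform law on the cube. -/
lemma map_cdfMap_ac (hm : ∀ i t, m i {t} = 0) (hmac : ∀ i, m i ≪ volume)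
    {ν : Measure (Fin d → ℝ)} (hν : ∀ i, marg ν i = m i) (hac : ν ≪ volume) :
    ν.map (cdfMap m) ≪ volume := by
  have hpos : ∀ᵐ u ∂ν, ∀ i, deriv (cdf1 (m i)) (u i) ≠ 0 := by
    refine ae_all_iff.2 fun i => ?_
    have h : ∀ᵐ t ∂(m i), deriv (cdf1 (m i)) t ≠ 0 := by
      conv => enter [2]; rw [← withDensity_deriv_cdf1 (hmac i)]
      rw [ae_withDensity_iff (measurable_deriv _).ennreal_ofReal]
      exact Filter.Eventually.of_forall fun t ht h0 => ht (by rw [h0, ENNReal.ofReal_zero])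
    exact ae_of_ae_map (μ := ν) (measurable_pi_apply i).aemeasurable
      ((hν i).absolutelyContinuous.ae_le h)
  have hνpi : ν ≪ Measure.pi m := by
    refine Measure.AbsolutelyContinuous.mk fun s hs h0 => ?_
    have hmeas : Measurable fun u : Fin d → ℝ =>
        ENNReal.ofReal (∏ i, deriv (cdf1 (m i)) (u i)) :=
      (Finset.measurable_prod _ fun i _ =>
        (measurable_deriv _).comp (measurable_pi_apply i)).ennreal_ofReal
    rw [pi_eq_withDensity m hmac, withDensity_apply_eq_zero hmeas] at h0
    refine measure_mono_null (fun u hu => ?_) (measure_union_null (hac h0) (ae_iff.1 hpos))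
    by_cases hu' : ∀ i, deriv (cdf1 (m i)) (u i) ≠ 0
    · refine Or.inl ⟨?_, hu⟩
      have : 0 < ∏ i, deriv (cdf1 (m i)) (u i) :=
        Finset.prod_pos fun i _ => lt_of_le_of_ne (deriv_cdf1_nonneg _) (Ne.symm (hu' i))
      exact (ENNReal.ofReal_pos.2 this).ne'
    · exact Or.inr hu'
  have h := hνpi.map (measurable_cdfMap (m := m))
  rw [map_cdfMap_pi hm] at h
  exact h.trans Measure.absolutelyContinuous_restrict

end Core

/-! ### Symmetrization -/

section Symm

lemma symmetrize_ac {ν : Measure (Fin d → ℝ)} (h : ν ≪ volume) : symmetrize ν ≪ volume := by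
  refine Measure.AbsolutelyContinuous.mk fun s hs h0 => ?_
  rw [symmetrize_apply _ hs]
  refine mul_eq_zero_of_right _ (Finset.sum_eq_zero fun π _ => h ?_)
  rw [← map_perm_volume π, Measure.map_apply (measurable_perm π) hs] at h0
  exact h0

lemma ac_symmetrize (ν : Measure (Fin d → ℝ)) : ν ≪ symmetrize ν := by
  refine Measure.AbsolutelyContinuous.mk fun s hs h0 => ?_
  rw [symmetrize_apply _ hs, mul_eq_zero, ENNReal.inv_eq_zero] at h0
  have h := h0.resolve_left (ENNReal.natCast_ne_top _)
  have := (Finset.sum_eq_zero_iff.1 h) (Equiv.refl _) (Finset.mem_univ _)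
  exact this

/-- A law `ν` supported by monotone vectors is determined by its symmetrization: `ν s` is the mass
which the symmetrization gives to the orbit of `s ∩ {monotone vectors}` under permutations. -/
lemma symmetrize_inj {ν ν' : Measure (Fin d → ℝ)} (h : ∀ᵐ x ∂ν, Monotone x)
    (h' : ∀ᵐ x ∂ν', Monotone x) (he : symmetrize ν = symmetrize ν') : ν = ν' := by
  have key : ∀ (s : Set (Fin d → ℝ)), MeasurableSet s → ∃ t, MeasurableSet t ∧
      ∀ ν : Measure (Fin d → ℝ), (∀ᵐ x ∂ν, Monotone x) → symmetrize ν t = ν s := by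
    intro s hs
    have hmono : MeasurableSet {x : Fin d → ℝ | Monotone x} := isClosed_monotone.measurableSet
    let t : Set (Fin d → ℝ) := ⋃ π : Equiv.Perm (Fin d),
      (fun (x : Fin d → ℝ) i => x (π i)) ⁻¹' (s ∩ {x | Monotone x})
    have ht : MeasurableSet t :=
      MeasurableSet.iUnion fun π => measurable_perm π (hs.inter hmono)
    refine ⟨t, ht, fun ν hν => ?_⟩
    have hinv : ∀ (x : Fin d → ℝ) (π : Equiv.Perm (Fin d)), (fun i => x (π i)) ∈ t ↔ x ∈ t := by
      intro x π
      simp only [t, mem_iUnion, mem_preimage]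
      constructor
      · rintro ⟨σ, hσ⟩; exact ⟨σ.trans π, hσ⟩
      · rintro ⟨σ, hσ⟩
        exact ⟨σ.trans π.symm, by simpa using hσ⟩
    have hts : ν t = ν s := by
      refine measure_congr ?_
      filter_upwards [hν] with x hx
      refine propext ⟨fun hxt => ?_, fun hxs => ?_⟩
      · obtain ⟨π, hπ⟩ := mem_iUnion.1 hxt
        have e : x ∘ π = x ∘ (Equiv.refl _ : Equiv.Perm (Fin d)) :=
          Tuple.unique_monotone hπ.2 (by simpa using hx)
        have : (fun i => x (π i)) = x := e
        rw [← this]; exact hπ.1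
      · exact mem_iUnion.2 ⟨Equiv.refl _, hxs, hx⟩
    have hpre : ∀ π : Equiv.Perm (Fin d), (fun (x : Fin d → ℝ) i => x (π i)) ⁻¹' t = t :=
      fun π => Set.ext fun x => hinv x π
    rw [symmetrize_apply _ ht]
    simp only [hpre, Finset.sum_const, Finset.card_univ, Fintype.card_perm,
      Fintype.card_fin, nsmul_eq_mul]
    rw [← mul_assoc, ENNReal.inv_mul_cancel (by exact_mod_cast d.factorial_ne_zero)
      (ENNReal.natCast_ne_top _), one_mul, hts]
  ext s hs
  obtain ⟨t, -, ht⟩ := key s hs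
  rw [← ht ν h, ← ht ν' h', he]

/-- The symmetrization of a law with density `g` supported by monotone vectors has density
`(d!)⁻¹ g(u_(1), …, u_(d))`: at a vector with distinct entries, the sorting permutation is the only
one that contributes. -/
lemma rnDeriv_symmetrize {g : (Fin d → ℝ) → ℝ≥0∞} (hg : Measurable g)
    (hmono : ∀ᵐ x ∂((volume : Measure (Fin d → ℝ)).withDensity g), Monotone x) :
    ∀ᵐ u ∂(volume : Measure (Fin d → ℝ)),
      (symmetrize ((volume : Measure (Fin d → ℝ)).withDensity g)).rnDeriv volume u =
        (d.factorial : ℝ≥0∞)⁻¹ * g (orderStat u) := by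
  have hdens : symmetrize ((volume : Measure (Fin d → ℝ)).withDensity g) =
      volume.withDensity fun u => (d.factorial : ℝ≥0∞)⁻¹ *
        ∑ π : Equiv.Perm (Fin d), g (fun i => u (π i)) := by
    have hgm : ∀ π : Equiv.Perm (Fin d), Measurable fun u : Fin d → ℝ => g (fun i => u (π i)) :=
      fun π => hg.comp (measurable_perm π)
    ext s hs
    rw [symmetrize_apply _ hs, withDensity_apply _ hs, lintegral_const_mul _
      (Finset.measurable_sum _ fun π _ => hgm π), lintegral_finsetSum _ fun π _ => hgm π]
    congr 1
    rw [← Equiv.sum_comp (Equiv.inv (Equiv.Perm (Fin d)))]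
    refine Finset.sum_congr rfl fun π _ => ?_
    have h := map_withDensity_comp (volume : Measure (Fin d → ℝ))
      (measurable_perm π⁻¹) (hgm π)
    rw [map_perm_volume] at h
    have h2 := congrArg (fun ν : Measure (Fin d → ℝ) => ν s) h
    simp only [Measure.map_apply (measurable_perm π⁻¹) hs, withDensity_apply _ hs] at h2
    rw [← h2]
    simp
  have h0 : ∀ᵐ u ∂(volume : Measure (Fin d → ℝ)), ¬ Monotone u → g u = 0 := by
    rw [ae_withDensity_iff hg] at hmono
    filter_upwards [hmono] with u hu hn
    by_contra hgu
    exact hn (hu hgu)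
  have h0' : ∀ᵐ u ∂(volume : Measure (Fin d → ℝ)), ∀ π : Equiv.Perm (Fin d),
      ¬ Monotone (fun i => u (π i)) → g (fun i => u (π i)) = 0 := by
    refine ae_all_iff.2 fun π => ?_
    exact ae_of_ae_map (measurable_perm π).aemeasurable (by rwa [map_perm_volume])
  rw [hdens]
  filter_upwards [Measure.rnDeriv_withDensity (volume : Measure (Fin d → ℝ))
    (measurable_const.mul (Finset.measurable_sum _ fun π _ => hg.comp (measurable_perm π))),
    h0', ae_injective] with u hu hu0 hinj
  refine hu.trans (congrArg (fun y => (d.factorial : ℝ≥0∞)⁻¹ * y) ?_)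
  refine Finset.sum_eq_single (Tuple.sort u) (fun π _ hπ => hu0 π fun hm => hπ ?_)
    (fun h => absurd (Finset.mem_univ _) h)
  have e : u ∘ π = u ∘ Tuple.sort u := Tuple.comp_sort_eq_comp_iff_monotone.2 hm
  exact Equiv.ext fun i => hinj (congrFun e i)

end Symm

/-! ### The average law and the factorization through `G` -/

section Marginals

/-- The law with cdf `G`, the average of the marginals. -/
def avgLaw (F : Fin d → Measure ℝ) : Measure ℝ := (d : ℝ≥0∞)⁻¹ • ∑ i, F i

lemma avgLaw_apply (F : Fin d → Measure ℝ) (s : Set ℝ) :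
    avgLaw F s = (d : ℝ≥0∞)⁻¹ * ∑ i, F i s := by
  simp [avgLaw, Measure.finsetSum_apply]

lemma ac_avgLaw (F : Fin d → Measure ℝ) (i : Fin d) : F i ≪ avgLaw F := by
  intro s hs
  rw [avgLaw_apply, mul_eq_zero, ENNReal.inv_eq_zero] at hs
  exact Finset.sum_eq_zero_iff.1 (hs.resolve_left (ENNReal.natCast_ne_top _)) i (Finset.mem_univ i)

variable [NeZero d] {F : Fin d → Measure ℝ}

lemma IsMargOS.avg_prob (hF : IsMargOS F) : IsProbabilityMeasure (avgLaw F) := by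
  have := hF.prob
  refine ⟨?_⟩
  rw [avgLaw_apply]
  simp only [measure_univ, Finset.sum_const, Finset.card_univ, Fintype.card_fin, nsmul_eq_mul,
    mul_one]
  exact ENNReal.inv_mul_cancel (by exact_mod_cast NeZero.ne d) (ENNReal.natCast_ne_top _)

lemma IsMargOS.avg_cont (hF : IsMargOS F) (t : ℝ) : avgLaw F {t} = 0 := by
  rw [avgLaw_apply]; simp [hF.cont]

lemma IsMargOS.cdf1_avg (hF : IsMargOS F) : cdf1 (avgLaw F) = Gbar F := by
  have := hF.prob
  ext t
  rw [cdf1, avgLaw_apply, ENNReal.toReal_mul, ENNReal.toReal_sum fun i _ => measure_ne_top _ _,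
    Gbar, ENNReal.toReal_inv, ENNReal.toReal_natCast, div_eq_inv_mul]
  rfl

lemma IsMargOS.mono_Gbar (hF : IsMargOS F) : Monotone (Gbar F) := by
  have := hF.avg_prob
  rw [← hF.cdf1_avg]; exact cdf1_mono_s15

lemma IsMargOS.prob_mdiag (hF : IsMargOS F) (i : Fin d) : IsProbabilityMeasure (mdiagF F i) := by
  have := hF.prob i
  exact Measure.isProbabilityMeasure_map hF.mono_Gbar.measurable.aemeasurable

/-- `δ_(i)` is absolutely continuous, as `(1/d) ∑ δ_(i)` is the uniform law. -/
lemma IsMargOS.mdiag_ac (hF : IsMargOS F) (i : Fin d) : mdiagF F i ≪ volume := by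
  have := hF.avg_prob
  have h := (ac_avgLaw F i).map hF.mono_Gbar.measurable
  rw [← hF.cdf1_avg, map_cdf1 hF.avg_cont, hF.cdf1_avg] at h
  exact h.trans Measure.absolutelyContinuous_restrict

lemma IsMargOS.mdiag_cont (hF : IsMargOS F) (i : Fin d) (t : ℝ) : mdiagF F i {t} = 0 :=
  hF.mdiag_ac i Real.volume_singleton

/-- `F_i = δ_(i) ∘ G`, since the level sets of `G` are null. -/
lemma IsMargOS.cdf1_mdiag_Gbar (hF : IsMargOS F) (i : Fin d) (t : ℝ) :
    cdf1 (mdiagF F i) (Gbar F t) = cdf1 (F i) t := by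
  have := hF.avg_prob
  rw [cdf1, mdiagF, Measure.map_apply hF.mono_Gbar.measurable measurableSet_Iic, cdf1]
  congr 1
  apply le_antisymm
  · have h0 : F i {s | Gbar F s = Gbar F t} = 0 := by
      rw [← hF.cdf1_avg]
      exact ac_avgLaw F i (cdf1_level_null hF.avg_cont _)
    calc F i (Gbar F ⁻¹' Iic (Gbar F t)) ≤ F i (Iic t ∪ {s | Gbar F s = Gbar F t}) := by
          refine measure_mono fun s hs => ?_
          rcases le_or_gt s t with h | h
          · exact Or.inl h
          · exact Or.inr (le_antisymm hs (hF.mono_Gbar h.le))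
      _ ≤ F i (Iic t) + F i {s | Gbar F s = Gbar F t} := measure_union_le _ _
      _ = F i (Iic t) := by rw [h0, add_zero]
  · exact measure_mono fun s hs => hF.mono_Gbar hs

/-- Averaging `f (π i)` over all permutations `π` gives the average of `f`. -/
lemma sum_perm_apply (f : Fin d → ℝ≥0∞) (i : Fin d) :
    (d.factorial : ℝ≥0∞)⁻¹ * ∑ π : Equiv.Perm (Fin d), f (π i) = (d : ℝ≥0∞)⁻¹ * ∑ j, f j := by
  have hindep : ∀ j, ∑ π : Equiv.Perm (Fin d), f (π j) = ∑ π : Equiv.Perm (Fin d), f (π i) := by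
    intro j
    rw [← Equiv.sum_comp (Equiv.mulRight (Equiv.swap i j))]
    simp
  have h1 : (d : ℝ≥0∞) * ∑ π : Equiv.Perm (Fin d), f (π i) = d.factorial * ∑ j, f j := by
    calc (d : ℝ≥0∞) * ∑ π : Equiv.Perm (Fin d), f (π i)
        = ∑ j : Fin d, ∑ π : Equiv.Perm (Fin d), f (π j) := by simp [hindep]
      _ = ∑ π : Equiv.Perm (Fin d), ∑ j : Fin d, f (π j) := Finset.sum_comm
      _ = d.factorial * ∑ j, f j := by simp [Equiv.sum_comp, Fintype.card_perm]
  have hd : (d : ℝ≥0∞) ≠ 0 := by exact_mod_cast NeZero.ne d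
  have hd' : (d.factorial : ℝ≥0∞) ≠ 0 := by exact_mod_cast d.factorial_ne_zero
  rw [← one_mul (∑ π : Equiv.Perm (Fin d), f (π i)),
    ← ENNReal.inv_mul_cancel hd (ENNReal.natCast_ne_top _), mul_assoc _ (d : ℝ≥0∞), h1,
    mul_left_comm, ← mul_assoc _ (d.factorial : ℝ≥0∞),
    ENNReal.inv_mul_cancel hd' (ENNReal.natCast_ne_top _), one_mul]

lemma marg_symmetrize {μ : Measure (Fin d → ℝ)} (hμ : ∀ i, marg μ i = F i) (i : Fin d) :
    marg (symmetrize μ) i = avgLaw F := by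
  ext s hs
  rw [marg, Measure.map_apply (measurable_pi_apply i) hs,
    symmetrize_apply _ (measurable_pi_apply i hs), avgLaw_apply, ← sum_perm_apply _ i]
  congr 1
  refine Finset.sum_congr rfl fun π _ => ?_
  rw [← hμ, marg, Measure.map_apply (measurable_pi_apply (π i)) hs]
  rfl

/-- The law of `(G(X_1), …, G(X_d))` for `X ∼ μ`. -/
def pushG (F : Fin d → Measure ℝ) (μ : Measure (Fin d → ℝ)) : Measure (Fin d → ℝ) :=
  μ.map fun x i => Gbar F (x i)

lemma IsMargOS.measurable_G (hF : IsMargOS F) :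
    Measurable fun (x : Fin d → ℝ) i => Gbar F (x i) :=
  measurable_pi_lambda _ fun i => hF.mono_Gbar.measurable.comp (measurable_pi_apply i)

variable {μ : Measure (Fin d → ℝ)}

lemma pushG_prob (hF : IsMargOS F) (hμ : IsCdfOS F μ) : IsProbabilityMeasure (pushG F μ) := by
  have := hμ.1
  exact Measure.isProbabilityMeasure_map hF.measurable_G.aemeasurable

lemma pushG_mono (hF : IsMargOS F) (hμ : IsCdfOS F μ) : ∀ᵐ u ∂(pushG F μ), Monotone u := by
  have := hμ.1
  have hm : MeasurableSet {x : Fin d → ℝ | Monotone x} := isClosed_monotone.measurableSet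
  have h : ∀ᵐ x ∂μ, Monotone x := (prob_compl_eq_zero_iff hm).2 hμ.2.1
  rw [pushG, ae_map_iff hF.measurable_G.aemeasurable hm]
  filter_upwards [h] with x hx i j hij using hF.mono_Gbar (hx hij)

lemma pushG_marg (hF : IsMargOS F) (hμ : IsCdfOS F μ) (i : Fin d) :
    marg (pushG F μ) i = mdiagF F i := by
  rw [marg, pushG, Measure.map_map (measurable_pi_apply i) hF.measurable_G, mdiagF, ← hμ.2.2 i,
    marg, Measure.map_map hF.mono_Gbar.measurable (measurable_pi_apply i)]
  rfl

/-- The copula of `X` is the image of the law of `G(X)` under the cdfs `δ_(i)`. -/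
lemma copulaOf_eq (hF : IsMargOS F) (hμ : IsCdfOS F μ) :
    copulaOf μ = (pushG F μ).map (cdfMap (mdiagF F)) := by
  have := hF.prob_mdiag
  rw [pushG, Measure.map_map measurable_cdfMap hF.measurable_G, copulaOf]
  congr 1
  ext x i
  rw [hμ.2.2 i]
  exact (hF.cdf1_mdiag_Gbar i (x i)).symm

/-- `S_F` of the copula of `X` is the symmetrized law of `G(X)`: the quantile transforms recover the
law of `X` from its copula, and every marginal of `X_Π` has cdf `G`. -/
lemma SF_copulaOf (hF : IsMargOS F) (hμ : IsCdfOS F μ) :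
    SF F (copulaOf μ) = symmetrize (pushG F μ) := by
  have := hF.prob
  have hjoin : joinCopula F (copulaOf μ) = μ := by
    have h := map_qMap_map_cdfMap hF.cont fun i => (hμ.2.2 i).absolutelyContinuous
    rw [copulaOf, funext hμ.2.2]
    exact h
  rw [SF, hjoin, copulaOf]
  simp only [marg_symmetrize hμ.2.2, hF.cdf1_avg]
  ext s hs
  rw [Measure.map_apply hF.measurable_G hs, symmetrize_apply _ (hF.measurable_G hs),
    symmetrize_apply _ hs]
  congr 1
  refine Finset.sum_congr rfl fun π _ => ?_
  rw [pushG, Measure.map_apply hF.measurable_G (measurable_perm π hs)]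
  rfl

end Marginals

/-- Lemma `lem:dens_c_ctilde`.  Let `F = (F_1, …, F_d) ∈ F_d^0`.  The
symmetrizing operator `S_F` is a bijection from `C^OS(F) ∩ C^0` onto `C^sym(F) ∩ C^0`;
moreover, if `C ∈ C^OS(F) ∩ C^0` has density `c`, then the density of `S_F(C)` at almost
every `u` is `(1/d!) c(δ_(1)(u_(1)), …, δ_(d)(u_(d))) ∏_{i=1}^d δ'_{(i)}(u_(i))`, where
`δ^F = (F_i ∘ G^{-1}, 1 ≤ i ≤ d)` and `G = (1/d) ∑ F_i`. -/
theorem stmt_15 {d : ℕ} [NeZero d] (F : Fin d → Measure ℝ) (hF : IsMargOS0 F) :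
    Set.InjOn (SF F) (copulaOS F ∩ {C | C ≪ (volume : Measure (Fin d → ℝ))}) ∧
    SF F '' (copulaOS F ∩ {C | C ≪ (volume : Measure (Fin d → ℝ))})
      = (SF F '' copulaOS F) ∩ {C | C ≪ (volume : Measure (Fin d → ℝ))} ∧
    ∀ C ∈ copulaOS F, C ≪ (volume : Measure (Fin d → ℝ)) →
      ∀ᵐ u ∂(volume : Measure (Fin d → ℝ)),
        ((SF F C).rnDeriv volume u).toReal =
          (d.factorial : ℝ)⁻¹ *
            (C.rnDeriv volume (fun i => cdf1 (mdiagF F i) (orderStat u i))).toReal *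
            ∏ i : Fin d, deriv (cdf1 (mdiagF F i)) (orderStat u i) := by
  have hM := hF.1
  have hprob := hM.prob_mdiag
  have hcont := hM.mdiag_cont
  have hpi : Measure.pi (mdiagF F) ≪ (volume : Measure (Fin d → ℝ)) := by
    rw [pi_eq_withDensity _ hM.mdiag_ac]
    exact withDensity_absolutelyContinuous _ _
  refine ⟨?_, ?_, ?_⟩
  · rintro _ ⟨⟨μ, hμ, rfl⟩, -⟩ _ ⟨⟨μ', hμ', rfl⟩, -⟩ he
    rw [SF_copulaOf hM hμ, SF_copulaOf hM hμ'] at he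
    rw [copulaOf_eq hM hμ, copulaOf_eq hM hμ',
      symmetrize_inj (pushG_mono hM hμ) (pushG_mono hM hμ') he]
  · apply Subset.antisymm
    · rintro _ ⟨_, ⟨⟨μ, hμ, rfl⟩, hac⟩, rfl⟩
      refine ⟨⟨_, ⟨μ, hμ, rfl⟩, rfl⟩, ?_⟩
      have := pushG_prob hM hμ
      rw [mem_ofPred_eq, copulaOf_eq hM hμ] at hac
      rw [mem_ofPred_eq, SF_copulaOf hM hμ]
      refine symmetrize_ac ?_
      rw [eq_pi_withDensity hcont (pushG_marg hM hμ) hac]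
      exact (withDensity_absolutelyContinuous _ _).trans hpi
    · rintro _ ⟨⟨_, ⟨μ, hμ, rfl⟩, rfl⟩, hac⟩
      refine ⟨_, ⟨⟨μ, hμ, rfl⟩, ?_⟩, rfl⟩
      rw [mem_ofPred_eq, SF_copulaOf hM hμ] at hac
      rw [mem_ofPred_eq, copulaOf_eq hM hμ]
      exact map_cdfMap_ac hcont hM.mdiag_ac (pushG_marg hM hμ) ((ac_symmetrize _).trans hac)
  · rintro _ ⟨μ, hμ, rfl⟩ hac
    have := pushG_prob hM hμ
    rw [SF_copulaOf hM hμ]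
    rw [copulaOf_eq hM hμ] at hac ⊢
    have hν := eq_pi_withDensity hcont (pushG_marg hM hμ) hac
    set c := ((pushG F μ).map (cdfMap (mdiagF F))).rnDeriv volume with hc
    have hcm : Measurable fun u => c (cdfMap (mdiagF F) u) :=
      (Measure.measurable_rnDeriv _ _).comp measurable_cdfMap
    have hpm : Measurable fun u : Fin d → ℝ =>
        ENNReal.ofReal (∏ i, deriv (cdf1 (mdiagF F i)) (u i)) :=
      (Finset.measurable_prod _ fun i _ =>
        (measurable_deriv _).comp (measurable_pi_apply i)).ennreal_ofReal
    rw [pi_eq_withDensity _ hM.mdiag_ac, ← withDensity_mul _ hpm hcm] at hν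
    have hmono := pushG_mono hM hμ
    rw [hν] at hmono
    rw [hν]
    filter_upwards [rnDeriv_symmetrize (hpm.mul hcm) hmono] with u hu
    rw [hu, Pi.mul_apply, ENNReal.toReal_mul, ENNReal.toReal_mul, ENNReal.toReal_inv,
      ENNReal.toReal_natCast, ENNReal.toReal_ofReal
        (Finset.prod_nonneg fun i _ => deriv_cdf1_nonneg _), mul_comm (∏ i, _), mul_assoc]
    rfl

end MaxEntOS
end
end
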